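/- arXiv:0712.2631 — 2 statements merged into one kernel-verified Lean document; each statement's English description precedes it below -/
import Mathlib

section
/- Let K ⊂ ℝ^{2n} be a convex body with 0 in its interior and smooth boundary, and let γ be a capacity carrier of K with period T₀. Then 4π·c(K) ≤ (∫₀^{T₀} |γ̇(t)| dt)², where |·| is the Euclidean norm. -/
open MeasureTheory Real Set Filter intervalIntegral Metric
open scoped InnerProductSpace Topology Pointwise

noncomputable section

/-- The phase space `ℝ^{2n}`. -/
abbrev E (n : ℕ) := EuclideanSpace ℝ (Fin (2 * n))

/-- The standard complex structure `J` on `ℝ^{2n}`, given in coordinates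
`(x₁,y₁,…,xₙ,yₙ)` by `J(x₁,y₁,…,xₙ,yₙ) = (−y₁,x₁,…,−yₙ,xₙ)`. -/
def Jmap (n : ℕ) (v : E n) : E n := WithLp.toLp 2 fun i =>
  if _h : i.val % 2 = 0 then -v ⟨i.val + 1, by have := i.isLt; omega⟩
  else v ⟨i.val - 1, by have := i.isLt; omega⟩

/-- The support function `h_K(u) = sup_{x ∈ K} ⟨x, u⟩`. -/
def suppFn (n : ℕ) (K : Set (E n)) (u : E n) : ℝ :=
  sSup ((fun x => ⟪x, u⟫_ℝ) '' K)

/-- A convex body: a compact convex set with nonempty interior. -/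
def IsConvexBody (n : ℕ) (K : Set (E n)) : Prop :=
  IsCompact K ∧ Convex ℝ K ∧ (interior K).Nonempty

/-- Membership in the loop space `𝓔_p`: the pair `(z, dz)` represents an absolutely
continuous `2π`-periodic loop `z` with derivative `dz ∈ L^p([0,2π])`, mean zero and
normalized action `(1/2)∫₀^{2π} ⟨J z, ż⟩ = 1`. -/
def InE (n : ℕ) (p : ℝ) (z dz : ℝ → E n) : Prop :=
  Function.Periodic z (2 * π) ∧
  (∀ a b : ℝ, IntervalIntegrable dz volume a b) ∧
  (∀ t, z t = z 0 + ∫ s in (0:ℝ)..t, dz s) ∧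
  MemLp dz (ENNReal.ofReal p) (volume.restrict (Set.Ioc (0:ℝ) (2 * π))) ∧
  (∫ t in (0:ℝ)..(2 * π), z t) = 0 ∧
  (1 / 2) * ∫ t in (0:ℝ)..(2 * π), ⟪Jmap n (z t), dz t⟫_ℝ = 1

/-- The (Ekeland–Hofer–Zehnder) capacity of a convex body,
`c(S) = (π · inf_{z ∈ 𝓔₂} (1/2π) ∫₀^{2π} h_S(ż(t)) dt)²`. -/
def capacity (n : ℕ) (S : Set (E n)) : ℝ :=
  (π * sInf { r : ℝ | ∃ z dz : ℝ → E n, InE n 2 z dz ∧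
      r = (1 / (2 * π)) * ∫ t in (0:ℝ)..(2 * π), suppFn n S (dz t) }) ^ 2

/-- The action `𝒜(γ) = (1/2) ∫₀^{T₀} ⟨−Jγ̇(t), γ(t)⟩ dt` of a `T₀`-periodic curve. -/
def action (n : ℕ) (γ : ℝ → E n) (T₀ : ℝ) : ℝ :=
  (1 / 2) * ∫ t in (0:ℝ)..T₀, ⟪-Jmap n (deriv γ t), γ t⟫_ℝ

/-- A closed characteristic on `∂K`: a nonconstant `T₀`-periodic `C¹` curve lying on
`∂K` satisfying `γ̇ = d·J∇F(γ)` for some `d > 0`, where `F = ‖·‖_K²`. -/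
def IsClosedCharacteristic (n : ℕ) (K : Set (E n)) (γ : ℝ → E n) (T₀ : ℝ) : Prop :=
  0 < T₀ ∧ Function.Periodic γ T₀ ∧ ContDiff ℝ 1 γ ∧ (∃ s t, γ s ≠ γ t) ∧
  (∀ t, γ t ∈ frontier K) ∧
  ∃ d : ℝ, 0 < d ∧ ∀ t, deriv γ t = d • Jmap n (gradient (fun x => gauge K x ^ 2) (γ t))

/-- A capacity carrier of `K`: a closed characteristic on `∂K` of minimal action. -/
def IsCapacityCarrier (n : ℕ) (K : Set (E n)) (γ : ℝ → E n) (T₀ : ℝ) : Prop :=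
  IsClosedCharacteristic n K γ T₀ ∧
  ∀ γ' T₀', IsClosedCharacteristic n K γ' T₀' → action n γ T₀ ≤ action n γ' T₀'

/-- The minimal action of a closed characteristic on `∂K`. -/
def minAction (n : ℕ) (K : Set (E n)) : ℝ :=
  sInf { a : ℝ | ∃ γ T₀, IsClosedCharacteristic n K γ T₀ ∧ a = action n γ T₀ }

/-- `K` has smooth boundary: its gauge function is `C¹` away from the origin. -/
def HasSmoothBoundary (n : ℕ) (K : Set (E n)) : Prop :=
  ContDiffOn ℝ 1 (gauge K) {(0 : E n)}ᶜ

/-- The `p`-sum `K +ₚ T` of Firey: the convex body with support function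
`(h_K^p + h_T^p)^{1/p}`. -/
def pSum (n : ℕ) (p : ℝ) (K T : Set (E n)) : Set (E n) :=
  { x | ∀ u, ⟪x, u⟫_ℝ ≤ (suppFn n K u ^ p + suppFn n T u ^ p) ^ (1 / p) }

/-- The polar body `T° = {x : ⟨x,y⟩ ≤ 1 for all y ∈ T}`. -/
def polarBody (n : ℕ) (T : Set (E n)) : Set (E n) :=
  { x | ∀ y ∈ T, ⟪x, y⟫_ℝ ≤ 1 }

/-- The length `∫₀^{T₀} ‖γ̇(t)‖_B dt` of a curve measured with the gauge of `B`. -/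
def lengthIn (n : ℕ) (B : Set (E n)) (γ : ℝ → E n) (T₀ : ℝ) : ℝ :=
  ∫ t in (0:ℝ)..T₀, gauge B (deriv γ t)

/-- Critical point of the functional `I_p(z) = ∫₀^{2π} h_K^p(ż(t)) dt` on `𝓔_p`. -/
def IsCriticalPoint (n : ℕ) (p : ℝ) (K : Set (E n)) (z dz : ℝ → E n) : Prop :=
  ∀ ξ dξ : ℝ → E n,
    Function.Periodic ξ (2 * π) →
    (∀ a b : ℝ, IntervalIntegrable dξ volume a b) →
    (∀ t, ξ t = ξ 0 + ∫ s in (0:ℝ)..t, dξ s) →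
    MemLp dξ (ENNReal.ofReal p) (volume.restrict (Set.Ioc (0:ℝ) (2 * π))) →
    (∫ t in (0:ℝ)..(2 * π), ξ t) = 0 →
    (∫ t in (0:ℝ)..(2 * π), ⟪ξ t, Jmap n (dz t)⟫_ℝ) = 0 →
    (∫ t in (0:ℝ)..(2 * π), ⟪gradient (fun u => suppFn n K u ^ p) (dz t), dξ t⟫_ℝ) = 0

/-- The rotation-invariant probability measure on the unit sphere of `ℝ^{2n}`. -/
def sphereMeasure (n : ℕ) : Measure (sphere (0 : E n) 1) :=
  ((volume : Measure (E n)).toSphere Set.univ)⁻¹ • (volume : Measure (E n)).toSphere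

/-- The mean width parameter `M*(K) = ∫_{S^{2n-1}} h_K dσ`. -/
def meanWidth (n : ℕ) (K : Set (E n)) : ℝ :=
  ∫ x : sphere (0 : E n) 1, suppFn n K (x : E n) ∂(sphereMeasure n)

/-!
The length of a closed curve controls its action: Wirtinger's inequality bounds the action of a
loop traversed at unit speed by its length squared over `4π`, and a reparametrization reduces the
general case to this one. The action of a closed characteristic in turn controls the capacity: the
rotated curve `-Jγ` has the same action as `γ`, and its velocity is the outer normal `d∇F(γ)`, on
which `h_K` takes the constant value `2d`. Rescaled, it is a test loop for the capacity whose
value is exactly the action of `γ`.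
-/

section Wirtinger

theorem memLp_restrict_Ioc_of_continuousOn {F : Type*} [NormedAddCommGroup F] {f : ℝ → F}
    {a b : ℝ} (hf : ContinuousOn f (Icc a b)) (p : ENNReal) :
    MemLp f p (volume.restrict (Ioc a b)) := by
  obtain ⟨C, hC⟩ := isCompact_Icc.exists_bound_of_continuousOn hf
  exact MemLp.of_bound ((hf.mono Ioc_subset_Icc_self).aestronglyMeasurable measurableSet_Ioc) C
    (ae_restrict_of_forall_mem measurableSet_Ioc fun x hx => hC x (Ioc_subset_Icc_self hx))

theorem norm_fourierCoeffOn_le_of_hasDerivAt {f f' : ℝ → ℂ} {a b : ℝ} (hab : a < b)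
    (hf : ContinuousOn f (Icc a b)) (hff' : ∀ x ∈ Ioo a b, HasDerivAt f (f' x) x)
    (hf' : IntervalIntegrable f' volume a b) (hfab : f a = f b) {k : ℤ} (hk : k ≠ 0) :
    ‖fourierCoeffOn hab f k‖ ≤ (b - a) / (2 * π) * ‖fourierCoeffOn hab f' k‖ := by
  have hba : 0 < b - a := sub_pos.2 hab
  have hk1 : (1 : ℝ) ≤ |(k : ℝ)| := by exact_mod_cast Int.one_le_abs hk
  have hcoeff : fourierCoeffOn hab f k = ((b - a : ℝ) : ℂ) / (2 * π * Complex.I * k) *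
      fourierCoeffOn hab f' k := by
    rw [← uIcc_of_le hab.le] at hf
    rw [← min_eq_left hab.le, ← max_eq_right hab.le] at hff'
    rw [fourierCoeffOn_of_hasDerivAt_Ioo hab hk hf (by simpa [hab.le] using hff') hf', hfab]
    push_cast
    ring
  have hnorm : ‖((b - a : ℝ) : ℂ) / (2 * π * Complex.I * k)‖ =
      (b - a) / (2 * π) / |(k : ℝ)| := by
    simp only [norm_div, norm_mul, Complex.norm_real, Complex.norm_I, Complex.norm_intCast,
      Complex.norm_ofNat, Real.norm_eq_abs, abs_of_pos hba, abs_of_pos pi_pos, mul_one, div_div]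
  rw [hcoeff, norm_mul, hnorm]
  exact mul_le_mul_of_nonneg_right (div_le_self (by positivity) hk1) (norm_nonneg _)

/- Parseval: the zeroth Fourier coefficient of `f` vanishes, and each other one is dominated by
that of `f'`. -/
theorem wirtinger_inequality_of_memLp {f f' : ℝ → ℂ} {a b : ℝ} (hab : a < b)
    (hf : ContinuousOn f (Icc a b)) (hff' : ∀ x ∈ Ioo a b, HasDerivAt f (f' x) x)
    (hf' : MemLp f' 2 (volume.restrict (Ioc a b))) (hfab : f a = f b)
    (hmean : ∫ x in a..b, f x = 0) :
    ∫ x in a..b, ‖f x‖ ^ 2 ≤ ((b - a) / (2 * π)) ^ 2 * ∫ x in a..b, ‖f' x‖ ^ 2 := by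
  have hint : IntervalIntegrable f' volume a b :=
    (intervalIntegrable_iff_integrableOn_Ioc_of_le hab.le).2 (hf'.integrable one_le_two)
  have hcoeff (k : ℤ) : ‖fourierCoeffOn hab f k‖ ^ 2 ≤
      ((b - a) / (2 * π)) ^ 2 * ‖fourierCoeffOn hab f' k‖ ^ 2 := by
    rw [← mul_pow]
    gcongr
    obtain rfl | hk := eq_or_ne k 0
    · have h0 : fourierCoeffOn hab f 0 = 0 := by simp [fourierCoeffOn_eq_integral, hmean]
      rw [h0, norm_zero]
      have := sub_pos.2 hab
      positivity
    · exact norm_fourierCoeffOn_le_of_hasDerivAt hab hf hff' hint hfab hk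
  have hparseval := hasSum_le hcoeff
    (hasSum_sq_fourierCoeffOn hab (memLp_restrict_Ioc_of_continuousOn hf 2))
    ((hasSum_sq_fourierCoeffOn hab hf').mul_left _)
  rw [smul_eq_mul, smul_eq_mul, mul_left_comm] at hparseval
  exact le_of_mul_le_mul_left hparseval (inv_pos.2 (sub_pos.2 hab))

end Wirtinger

section ClosedCurves

variable {V : Type*} [NormedAddCommGroup V] [InnerProductSpace ℝ V]
  {f f' : ℝ → V} {a b : ℝ}

theorem continuous_of_forall_hasDerivAt {W : Type*} [NormedAddCommGroup W] [NormedSpace ℝ W]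
    {g g' : ℝ → W} (hg : ∀ x, HasDerivAt g (g' x) x) : Continuous g :=
  continuous_iff_continuousAt.2 fun x => (hg x).continuousAt

theorem intervalIntegral_sub_intervalAverage {W : Type*} [NormedAddCommGroup W] [NormedSpace ℝ W]
    [CompleteSpace W] (g : ℝ → W) {a b : ℝ} (hab : a ≤ b) :
    ∫ x in a..b, (g x - ⨍ y in a..b, g y) = 0 := by
  rw [integral_of_le hab, uIoc_of_le hab]
  exact integral_sub_average _ _

theorem intervalIntegral_inner_map_sub_const (A : V →L[ℝ] V) (hf : ∀ x, HasDerivAt f (f' x) x)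
    (hf' : Continuous f') (hfab : f a = f b) (c : V) :
    ∫ x in a..b, ⟪A (f x - c), f' x⟫_ℝ = ∫ x in a..b, ⟪A (f x), f' x⟫_ℝ := by
  have hfc := continuous_of_forall_hasDerivAt hf
  have hderiv (x : ℝ) : HasDerivAt (fun x => ⟪A c, f x⟫_ℝ) ⟪A c, f' x⟫_ℝ x := by
    simpa using (hasDerivAt_const x (A c)).inner ℝ (hf x)
  have hconst : ∫ x in a..b, ⟪A c, f' x⟫_ℝ = 0 := by
    rw [integral_eq_sub_of_hasDerivAt (fun x _ => hderiv x)
      (Continuous.intervalIntegrable (by fun_prop) _ _), hfab, sub_self]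
  simp only [map_sub, inner_sub_left]
  rw [intervalIntegral.integral_sub (Continuous.intervalIntegrable (by fun_prop) _ _)
    (Continuous.intervalIntegrable (by fun_prop) _ _), hconst, sub_zero]

variable [FiniteDimensional ℝ V]

theorem wirtinger_inequality (hab : a < b) (hf : ∀ x, HasDerivAt f (f' x) x)
    (hf' : Continuous f') (hfab : f a = f b) (hmean : ∫ x in a..b, f x = 0) :
    ∫ x in a..b, ‖f x‖ ^ 2 ≤ ((b - a) / (2 * π)) ^ 2 * ∫ x in a..b, ‖f' x‖ ^ 2 := by
  have hfc := continuous_of_forall_hasDerivAt hf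
  let e := stdOrthonormalBasis ℝ V
  have hcoord (i) : ∫ x in a..b, ‖⟪e i, f x⟫_ℝ‖ ^ 2 ≤
      ((b - a) / (2 * π)) ^ 2 * ∫ x in a..b, ‖⟪e i, f' x⟫_ℝ‖ ^ 2 := by
    have hderiv (x : ℝ) : HasDerivAt (fun x => (⟪e i, f x⟫_ℝ : ℂ)) ⟪e i, f' x⟫_ℝ x := by
      simpa using ((hasDerivAt_const x (e i)).inner ℝ (hf x)).ofReal_comp
    have hmean_i : ∫ x in a..b, (⟪e i, f x⟫_ℝ : ℂ) = 0 := by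
      rw [intervalIntegral.integral_ofReal, Complex.ofReal_eq_zero]
      simpa [hmean] using
        (innerSL ℝ (e i)).intervalIntegral_comp_comm (hfc.intervalIntegrable (μ := volume) a b)
    have hcont : Continuous fun x => (⟪e i, f' x⟫_ℝ : ℂ) := by fun_prop
    simpa only [Complex.norm_real] using wirtinger_inequality_of_memLp hab
      (continuous_of_forall_hasDerivAt hderiv).continuousOn (fun x _ => hderiv x)
      (memLp_restrict_Ioc_of_continuousOn hcont.continuousOn 2) (by simp only [hfab]) hmean_i
  simp only [← e.sum_sq_norm_inner_right]
  have hint (g : ℝ → V) (hg : Continuous g) (i) :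
      IntervalIntegrable (fun x => ‖⟪e i, g x⟫_ℝ‖ ^ 2) volume a b :=
    Continuous.intervalIntegrable (by fun_prop) a b
  rw [intervalIntegral.integral_finsetSum, intervalIntegral.integral_finsetSum, Finset.mul_sum]
  · exact Finset.sum_le_sum fun i _ => hcoord i
  · exact fun i _ => hint f' hf' i
  · exact fun i _ => hint f hfc i

theorem intervalIntegral_inner_map_le_intervalIntegral_norm_sq (A : V →L[ℝ] V) (hab : a < b)
    (hf : ∀ x, HasDerivAt f (f' x) x) (hf' : Continuous f') (hfab : f a = f b) :
    ∫ x in a..b, ⟪A (f x), f' x⟫_ℝ ≤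
      ‖A‖ * ((b - a) / (2 * π)) * ∫ x in a..b, ‖f' x‖ ^ 2 := by
  set r := (b - a) / (2 * π)
  have hr : 0 < r := div_pos (sub_pos.2 hab) two_pi_pos
  set c := ⨍ y in a..b, f y
  have hfc := continuous_of_forall_hasDerivAt hf
  have hwirtinger : ∫ x in a..b, ‖f x - c‖ ^ 2 ≤ r ^ 2 * ∫ x in a..b, ‖f' x‖ ^ 2 :=
    wirtinger_inequality hab (fun x => (hf x).sub_const c) hf' (by simp only [hfab])
      (intervalIntegral_sub_intervalAverage f hab.le)
  have hpointwise (x : ℝ) : ⟪A (f x - c), f' x⟫_ℝ ≤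
      ‖A‖ / 2 * (r⁻¹ * ‖f x - c‖ ^ 2 + r * ‖f' x‖ ^ 2) := by
    have hAMGM : 2 * (‖f x - c‖ * ‖f' x‖) ≤ r⁻¹ * ‖f x - c‖ ^ 2 + r * ‖f' x‖ ^ 2 := by
      have := mul_nonneg (inv_nonneg.2 hr.le) (sq_nonneg (‖f x - c‖ - r * ‖f' x‖))
      field_simp at this ⊢
      linarith
    calc ⟪A (f x - c), f' x⟫_ℝ ≤ ‖A (f x - c)‖ * ‖f' x‖ := real_inner_le_norm _ _
      _ ≤ ‖A‖ * ‖f x - c‖ * ‖f' x‖ := by gcongr; exact A.le_opNorm _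
      _ = ‖A‖ / 2 * (2 * (‖f x - c‖ * ‖f' x‖)) := by ring
      _ ≤ _ := by gcongr
  calc ∫ x in a..b, ⟪A (f x), f' x⟫_ℝ = ∫ x in a..b, ⟪A (f x - c), f' x⟫_ℝ :=
        (intervalIntegral_inner_map_sub_const A hf hf' hfab c).symm
    _ ≤ ∫ x in a..b, ‖A‖ / 2 * (r⁻¹ * ‖f x - c‖ ^ 2 + r * ‖f' x‖ ^ 2) :=
        integral_mono hab.le (Continuous.intervalIntegrable (by fun_prop) _ _)
          (Continuous.intervalIntegrable (by fun_prop) _ _) hpointwise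
    _ = ‖A‖ / 2 * (r⁻¹ * (∫ x in a..b, ‖f x - c‖ ^ 2) + r * ∫ x in a..b, ‖f' x‖ ^ 2) := by
        rw [intervalIntegral.integral_const_mul, intervalIntegral.integral_add
          (Continuous.intervalIntegrable (by fun_prop) _ _)
          (Continuous.intervalIntegrable (by fun_prop) _ _),
          intervalIntegral.integral_const_mul, intervalIntegral.integral_const_mul]
    _ ≤ ‖A‖ / 2 * (r⁻¹ * (r ^ 2 * ∫ x in a..b, ‖f' x‖ ^ 2) + r * ∫ x in a..b, ‖f' x‖ ^ 2) := by
        gcongr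
    _ = ‖A‖ * r * ∫ x in a..b, ‖f' x‖ ^ 2 := by field_simp; ring

theorem exists_hasDerivAt_inv_of_continuous {w : ℝ → ℝ} {ε : ℝ} (hw : Continuous w) (hε : 0 < ε)
    (hεw : ∀ x, ε ≤ w x) (a b : ℝ) :
    ∃ τ : ℝ → ℝ, τ 0 = a ∧ τ (∫ x in a..b, w x) = b ∧ ∀ s, HasDerivAt τ (w (τ s))⁻¹ s := by
  have hwpos (x : ℝ) : 0 < w x := hε.trans_le (hεw x)
  set σ : ℝ → ℝ := fun t => ∫ x in a..t, w x
  have hσa : σ a = 0 := integral_same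
  have hσ (t : ℝ) : HasDerivAt σ (w t) t := hw.integral_hasStrictDerivAt a t |>.hasDerivAt
  have hσmono : StrictMono σ := strictMono_of_hasDerivAt_pos hσ hwpos
  have hgrowth : Monotone fun t => σ t - ε * t :=
    monotone_of_hasDerivAt_nonneg (fun t => (hσ t).sub ((hasDerivAt_id t).const_mul ε))
      fun t => by simpa using hεw t
  have hσtop : Tendsto σ atTop atTop := by
    refine tendsto_atTop_mono' atTop ?_
      ((tendsto_id.const_mul_atTop hε).atTop_add (tendsto_const_nhds (x := -(ε * a))))
    filter_upwards [eventually_ge_atTop a] with t ht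
    have : σ a - ε * a ≤ σ t - ε * t := hgrowth ht
    simp only [id]
    linarith
  have hσbot : Tendsto σ atBot atBot := by
    refine tendsto_atBot_mono' atBot ?_
      ((tendsto_id.const_mul_atBot hε).atBot_add (tendsto_const_nhds (x := -(ε * a))))
    filter_upwards [eventually_le_atBot a] with t ht
    have : σ t - ε * t ≤ σ a - ε * a := hgrowth ht
    simp only [id]
    linarith
  let e : ℝ ≃o ℝ := hσmono.orderIsoOfSurjective σ
    ((continuous_of_forall_hasDerivAt hσ).surjective hσtop hσbot)
  refine ⟨e.symm, ?_, e.symm_apply_apply b, fun s => ?_⟩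
  · rw [← hσa]
    exact e.symm_apply_apply a
  · exact (hσ _).of_local_left_inverse e.symm.continuous.continuousAt (hwpos _).ne'
      (Eventually.of_forall e.apply_symm_apply)

/- Reparametrize `f` by the primitive of `w`: in the new parameter, which runs over an interval of
length `∫ w`, the speed is at most `1`. -/
theorem two_pi_mul_intervalIntegral_inner_map_le_of_norm_le (A : V →L[ℝ] V) {w : ℝ → ℝ} {ε : ℝ}
    (hab : a < b) (hf : ∀ x, HasDerivAt f (f' x) x) (hf' : Continuous f') (hfab : f a = f b)
    (hw : Continuous w) (hε : 0 < ε) (hεw : ∀ x, ε ≤ w x) (hf'w : ∀ x, ‖f' x‖ ≤ w x) :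
    2 * π * ∫ x in a..b, ⟪A (f x), f' x⟫_ℝ ≤ ‖A‖ * (∫ x in a..b, w x) ^ 2 := by
  have hwpos (x : ℝ) : 0 < w x := hε.trans_le (hεw x)
  have hfc := continuous_of_forall_hasDerivAt hf
  obtain ⟨τ, hτ0, hτL, hτ⟩ := exists_hasDerivAt_inv_of_continuous hw hε hεw a b
  set L := ∫ x in a..b, w x
  have hL : 0 < L := intervalIntegral_pos_of_pos (hw.intervalIntegrable a b) hwpos hab
  have hτc := continuous_of_forall_hasDerivAt hτ
  have hτ'c : Continuous fun s => (w (τ s))⁻¹ := (hw.comp hτc).inv₀ fun s => (hwpos _).ne'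
  have hspeed (s : ℝ) : ‖(w (τ s))⁻¹ • f' (τ s)‖ ≤ 1 := by
    rw [norm_smul, norm_inv, Real.norm_of_nonneg (hwpos _).le]
    exact inv_mul_le_one_of_le₀ (hf'w _) (hwpos _).le
  have henergy : ∫ s in 0..L, ‖(w (τ s))⁻¹ • f' (τ s)‖ ^ 2 ≤ L := by
    calc ∫ s in 0..L, ‖(w (τ s))⁻¹ • f' (τ s)‖ ^ 2 ≤ ∫ _ in 0..L, (1 : ℝ) :=
          integral_mono hL.le (Continuous.intervalIntegrable (by fun_prop) _ _)
            intervalIntegrable_const fun s => pow_le_one₀ (norm_nonneg _) (hspeed s)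
      _ = L := by simp
  have harea : ∫ s in 0..L, ⟪A (f (τ s)), (w (τ s))⁻¹ • f' (τ s)⟫_ℝ =
      ∫ x in a..b, ⟪A (f x), f' x⟫_ℝ := by
    have hsubst := integral_comp_mul_deriv (a := 0) (b := L) (g := fun x => ⟪A (f x), f' x⟫_ℝ)
      (fun s _ => hτ s) hτ'c.continuousOn (by fun_prop)
    rw [hτ0, hτL] at hsubst
    simp only [← hsubst, inner_smul_right, Function.comp_apply, mul_comm]
  have hL2 := intervalIntegral_inner_map_le_intervalIntegral_norm_sq A hL
    (fun s => (hf (τ s)).scomp s (hτ s)) (hτ'c.smul (hf'.comp hτc))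
    (by simp only [Function.comp_apply, hτ0, hτL, hfab])
  calc 2 * π * ∫ x in a..b, ⟪A (f x), f' x⟫_ℝ
      = 2 * π * ∫ s in 0..L, ⟪A (f (τ s)), (w (τ s))⁻¹ • f' (τ s)⟫_ℝ := by rw [harea]
    _ ≤ 2 * π * (‖A‖ * ((L - 0) / (2 * π)) * L) := by
        gcongr
        exact hL2.trans (by gcongr)
    _ = ‖A‖ * L ^ 2 := by rw [sub_zero]; field_simp

/- `‖f'‖` may vanish, so it is bounded by the positive weight `‖f'‖ + ε` before letting `ε → 0`. -/
theorem two_pi_mul_intervalIntegral_inner_map_le (A : V →L[ℝ] V) (hab : a < b)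
    (hf : ∀ x, HasDerivAt f (f' x) x) (hf' : Continuous f') (hfab : f a = f b) :
    2 * π * ∫ x in a..b, ⟪A (f x), f' x⟫_ℝ ≤ ‖A‖ * (∫ x in a..b, ‖f' x‖) ^ 2 := by
  have hbound (ε : ℝ) (hε : 0 < ε) : 2 * π * ∫ x in a..b, ⟪A (f x), f' x⟫_ℝ ≤
      ‖A‖ * ((∫ x in a..b, ‖f' x‖) + (b - a) * ε) ^ 2 := by
    have := two_pi_mul_intervalIntegral_inner_map_le_of_norm_le A (w := fun x => ‖f' x‖ + ε) hab
      hf hf' hfab (by fun_prop) hε (fun x => le_add_of_nonneg_left (norm_nonneg _))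
      (fun x => le_add_of_nonneg_right hε.le)
    rwa [intervalIntegral.integral_add (hf'.norm.intervalIntegrable _ _) intervalIntegrable_const,
      intervalIntegral.integral_const, smul_eq_mul] at this
  have hlim : Tendsto (fun ε : ℝ => ‖A‖ * ((∫ x in a..b, ‖f' x‖) + (b - a) * ε) ^ 2) (𝓝[>] 0)
      (𝓝 (‖A‖ * (∫ x in a..b, ‖f' x‖) ^ 2)) := by
    refine (Continuous.tendsto' ?_ _ _ (by simp)).mono_left nhdsWithin_le_nhds
    fun_prop
  exact ge_of_tendsto hlim (eventually_nhdsWithin_of_forall hbound)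

end ClosedCurves

section Gauge

theorem fderiv_gauge_self {V : Type*} [NormedAddCommGroup V] [NormedSpace ℝ V] {K : Set V} {y : V}
    (hy : DifferentiableAt ℝ (gauge K) y) : fderiv ℝ (gauge K) y y = gauge K y := by
  have hline : HasDerivAt (fun t : ℝ => gauge K (y + t • y)) (fderiv ℝ (gauge K) y y) 0 :=
    hy.hasFDerivAt.hasLineDerivAt y
  have hlinear : HasDerivAt (fun t : ℝ => (1 + t) * gauge K y) (gauge K y) 0 := by
    simpa using ((hasDerivAt_id (0 : ℝ)).const_add 1).mul_const (gauge K y)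
  refine hline.unique (hlinear.congr_of_eventuallyEq ?_)
  filter_upwards [eventually_gt_nhds (show (-1 : ℝ) < 0 by simp)] with t ht
  have hsmul : y + t • y = (1 + t) • y := by rw [add_smul, one_smul]
  rw [hsmul, gauge_smul_of_nonneg (by linarith), smul_eq_mul]

theorem fderiv_gauge_le_gauge {V : Type*} [NormedAddCommGroup V] [NormedSpace ℝ V] {K : Set V}
    (hK : Convex ℝ K) (habs : Absorbent ℝ K) {y : V} (hy : DifferentiableAt ℝ (gauge K) y)
    (x : V) : fderiv ℝ (gauge K) y x ≤ gauge K x := by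
  refine le_of_tendsto (hy.hasFDerivAt.hasLineDerivAt x).tendsto_slope_zero_right ?_
  filter_upwards [self_mem_nhdsWithin] with t (ht : 0 < t)
  have hsub : gauge K (y + t • x) ≤ gauge K y + t * gauge K x := by
    simpa only [gauge_smul_of_nonneg ht.le, smul_eq_mul] using gauge_add_le hK habs y (t • x)
  rw [smul_eq_mul, inv_mul_le_iff₀ ht]
  linarith

variable {V : Type*} [NormedAddCommGroup V] [InnerProductSpace ℝ V] [CompleteSpace V]
  {K : Set V} {y : V}

theorem gradient_gauge_sq (hy : DifferentiableAt ℝ (gauge K) y) :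
    gradient (fun x => gauge K x ^ 2) y = (2 * gauge K y) • gradient (gauge K) y := by
  refine HasGradientAt.gradient ?_
  rw [hasGradientAt_iff_hasFDerivAt, map_smul, toDual_gradient]
  simpa using hy.hasFDerivAt.pow 2

theorem inner_gradient_gauge_sq_self (hy : DifferentiableAt ℝ (gauge K) y) :
    ⟪gradient (fun x => gauge K x ^ 2) y, y⟫_ℝ = 2 * gauge K y ^ 2 := by
  rw [gradient_gauge_sq hy, real_inner_smul_left, inner_gradient_left, fderiv_gauge_self hy]
  ring

theorem inner_gradient_gauge_sq_le (hK : Convex ℝ K) (habs : Absorbent ℝ K)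
    (hy : DifferentiableAt ℝ (gauge K) y) (x : V) :
    ⟪gradient (fun x => gauge K x ^ 2) y, x⟫_ℝ ≤ 2 * gauge K y * gauge K x := by
  rw [gradient_gauge_sq hy, real_inner_smul_left, inner_gradient_left]
  exact mul_le_mul_of_nonneg_left (fderiv_gauge_le_gauge hK habs hy x)
    (mul_nonneg zero_le_two (gauge_nonneg y))

end Gauge

section SupportFunction

variable {n : ℕ} {K : Set (E n)}

theorem suppFn_nonneg (h0K : 0 ∈ K) (u : E n) : 0 ≤ suppFn n K u :=
  Real.sSup_nonneg' ⟨0, ⟨0, h0K, inner_zero_left u⟩, le_rfl⟩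

theorem suppFn_smul {r : ℝ} (hr : 0 ≤ r) (u : E n) : suppFn n K (r • u) = r * suppFn n K u := by
  have himage : (fun x => ⟪x, r • u⟫_ℝ) '' K = r • (fun x => ⟪x, u⟫_ℝ) '' K := by
    simp only [← image_smul, image_image, inner_smul_right, smul_eq_mul]
  rw [suppFn, himage, Real.sSup_smul_of_nonneg hr, smul_eq_mul, suppFn]

theorem suppFn_gradient_gauge_sq (hcl : IsClosed K) (hK : Convex ℝ K) (h0K : K ∈ 𝓝 0) {y : E n}
    (hyK : y ∈ frontier K) (hy : DifferentiableAt ℝ (gauge K) y) :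
    suppFn n K (gradient (fun x => gauge K x ^ 2) y) = 2 := by
  have hgauge : gauge K y = 1 := (gauge_eq_one_iff_mem_frontier hK h0K).2 hyK
  refine IsGreatest.csSup_eq ⟨⟨y, hcl.frontier_subset hyK, ?_⟩, ?_⟩
  · calc ⟪y, gradient (fun x => gauge K x ^ 2) y⟫_ℝ
        = ⟪gradient (fun x => gauge K x ^ 2) y, y⟫_ℝ := real_inner_comm _ _
      _ = 2 := by rw [inner_gradient_gauge_sq_self hy, hgauge, one_pow, mul_one]
  · rintro _ ⟨x, hx, rfl⟩
    calc ⟪x, gradient (fun x => gauge K x ^ 2) y⟫_ℝ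
        = ⟪gradient (fun x => gauge K x ^ 2) y, x⟫_ℝ := real_inner_comm _ _
      _ ≤ 2 * gauge K y * gauge K x :=
          inner_gradient_gauge_sq_le hK (absorbent_nhds_zero h0K) hy x
      _ ≤ 2 := by rw [hgauge]; linarith [gauge_le_one_of_mem hx]

end SupportFunction

section ComplexStructure

/-- The index of the coordinate conjugate to the `i`-th one: `xₖ` and `yₖ` have the indices `2k`
and `2k + 1`. Up to signs, `Jmap` permutes the coordinates in this way. -/
def conjIndex {n : ℕ} (i : Fin (2 * n)) : Fin (2 * n) :=
  if _h : i.val % 2 = 0 then ⟨i.val + 1, by lia⟩ else ⟨i.val - 1, by lia⟩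

variable {n : ℕ}

theorem conjIndex_involutive : Function.Involutive (conjIndex (n := n)) := by
  intro i
  ext
  simp only [conjIndex]
  grind

theorem conjIndex_val_mod_two (i : Fin (2 * n)) :
    (conjIndex i).val % 2 = 0 ↔ ¬ i.val % 2 = 0 := by
  rw [conjIndex]
  grind

theorem Jmap_apply (v : E n) (i : Fin (2 * n)) :
    Jmap n v i = if i.val % 2 = 0 then -v (conjIndex i) else v (conjIndex i) := by
  simp only [Jmap, conjIndex]
  split_ifs <;> rfl

theorem norm_Jmap (v : E n) : ‖Jmap n v‖ = ‖v‖ := by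
  have hcoord (i : Fin (2 * n)) : ‖Jmap n v i‖ = ‖v (conjIndex i)‖ := by
    rw [Jmap_apply]
    split_ifs <;> simp only [norm_neg]
  rw [EuclideanSpace.norm_eq, EuclideanSpace.norm_eq]
  simp only [hcoord]
  rw [conjIndex_involutive.bijective.sum_comp fun i => ‖v i‖ ^ 2]

theorem Jmap_Jmap (v : E n) : Jmap n (Jmap n v) = -v := by
  ext i
  simp only [Jmap_apply, conjIndex_val_mod_two, conjIndex_involutive i, PiLp.neg_apply]
  split_ifs <;> rfl

/-- The complex structure `Jmap`, bundled as a linear isometry. -/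
def complexStructure (n : ℕ) : E n →ₗᵢ[ℝ] E n where
  toFun := Jmap n
  map_add' u v := by ext i; simp only [Jmap_apply, PiLp.add_apply]; split_ifs <;> ring
  map_smul' r v := by
    ext i; simp only [Jmap_apply, PiLp.smul_apply, smul_eq_mul, RingHom.id_apply]
    split_ifs <;> ring
  norm_map' := norm_Jmap

theorem Jmap_eq_complexStructure (v : E n) : Jmap n v = complexStructure n v := rfl

theorem complexStructure_complexStructure (v : E n) :
    complexStructure n (complexStructure n v) = -v :=
  Jmap_Jmap v

theorem inner_complexStructure_left (u v : E n) :
    ⟪complexStructure n u, v⟫_ℝ = -⟪u, complexStructure n v⟫_ℝ := by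
  rw [← (complexStructure n).inner_map_map, complexStructure_complexStructure, inner_neg_left]

end ComplexStructure

section Capacity

variable {n : ℕ} {K : Set (E n)} {γ : ℝ → E n} {T : ℝ}

theorem action_eq_integral_inner_Jmap (γ : ℝ → E n) (T : ℝ) :
    action n γ T = 1 / 2 * ∫ t in 0..T, ⟪Jmap n (γ t), deriv γ t⟫_ℝ := by
  simp only [action, Jmap_eq_complexStructure, inner_neg_left, inner_complexStructure_left,
    neg_neg]
  congr! 4 with t
  calc ⟪deriv γ t, complexStructure n (γ t)⟫_ℝ
      = ⟪complexStructure n (γ t), deriv γ t⟫_ℝ := real_inner_comm _ _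
    _ = -⟪γ t, complexStructure n (deriv γ t)⟫_ℝ := inner_complexStructure_left _ _

theorem four_pi_mul_action_le (hT : 0 < T) (hγ : ContDiff ℝ 1 γ) (hγT : γ 0 = γ T) :
    4 * π * action n γ T ≤ (∫ t in 0..T, ‖deriv γ t‖) ^ 2 := by
  have hJ : ‖(complexStructure n).toContinuousLinearMap‖ ≤ 1 :=
    (complexStructure n).norm_toContinuousLinearMap_le
  have hderiv (t : ℝ) : HasDerivAt γ (deriv γ t) t :=
    (hγ.differentiable one_ne_zero t).hasDerivAt
  calc 4 * π * action n γ T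
      = 2 * π * ∫ t in 0..T, ⟪complexStructure n (γ t), deriv γ t⟫_ℝ := by
        rw [action_eq_integral_inner_Jmap]
        simp only [Jmap_eq_complexStructure]
        ring
    _ ≤ ‖(complexStructure n).toContinuousLinearMap‖ * (∫ t in 0..T, ‖deriv γ t‖) ^ 2 :=
        two_pi_mul_intervalIntegral_inner_map_le (complexStructure n).toContinuousLinearMap hT
          hderiv (hγ.continuous_deriv le_rfl) hγT
    _ ≤ (∫ t in 0..T, ‖deriv γ t‖) ^ 2 := mul_le_of_le_one_left (sq_nonneg _) hJ

theorem capacity_le_of_inE (h0K : 0 ∈ K) {z dz : ℝ → E n} (hz : InE n 2 z dz) :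
    capacity n K ≤ (1 / 2 * ∫ t in 0..2 * π, suppFn n K (dz t)) ^ 2 := by
  have hnonneg (v : ℝ → E n) : 0 ≤ 1 / (2 * π) * ∫ t in 0..2 * π, suppFn n K (v t) :=
    mul_nonneg (by positivity)
      (intervalIntegral.integral_nonneg two_pi_pos.le fun t _ => suppFn_nonneg h0K (v t))
  calc capacity n K ≤ (π * (1 / (2 * π) * ∫ t in 0..2 * π, suppFn n K (dz t))) ^ 2 := by
        rw [capacity]
        gcongr
        · exact mul_nonneg pi_pos.le (Real.sInf_nonneg fun r ⟨_, v, _, hr⟩ => hr ▸ hnonneg v)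
        · exact csInf_le ⟨0, fun r ⟨_, v, _, hr⟩ => hr ▸ hnonneg v⟩ ⟨z, dz, hz, rfl⟩
    _ = (1 / 2 * ∫ t in 0..2 * π, suppFn n K (dz t)) ^ 2 := by field_simp

theorem inE_sub_intervalAverage {u u' : ℝ → E n} (p : ℝ) (hu : ∀ t, HasDerivAt u (u' t) t)
    (hu' : Continuous u') (hper : Function.Periodic u (2 * π))
    (haction : 1 / 2 * ∫ t in 0..2 * π, ⟪Jmap n (u t), u' t⟫_ℝ = 1) :
    InE n p (fun t => u t - ⨍ s in 0..2 * π, u s) u' := by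
  refine ⟨fun t => by simp only [hper t], hu'.intervalIntegrable, fun t => ?_,
    memLp_restrict_Ioc_of_continuousOn hu'.continuousOn _,
    intervalIntegral_sub_intervalAverage u two_pi_pos.le, ?_⟩
  · rw [integral_eq_sub_of_hasDerivAt (fun s _ => hu s) (hu'.intervalIntegrable _ _)]
    exact (sub_add_sub_cancel' _ _ _).symm
  · calc 1 / 2 * ∫ t in 0..2 * π, ⟪Jmap n (u t - ⨍ s in 0..2 * π, u s), u' t⟫_ℝ
        = 1 / 2 * ∫ t in 0..2 * π, ⟪Jmap n (u t), u' t⟫_ℝ := congrArg _ <|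
          intervalIntegral_inner_map_sub_const (complexStructure n).toContinuousLinearMap hu hu'
            hper.eq.symm _
      _ = 1 := haction

theorem integral_rescale_two_pi (g : ℝ → ℝ) (T : ℝ) :
    ∫ t in 0..2 * π, T / (2 * π) * g (T / (2 * π) * t) = ∫ t in 0..T, g t := by
  rw [intervalIntegral.integral_const_mul, mul_integral_comp_mul_left, mul_zero,
    div_mul_cancel₀ T two_pi_pos.ne']

theorem inE_rescale (p : ℝ) (hγ : ContDiff ℝ 1 γ) (hper : Function.Periodic γ T) {q : ℝ}
    (hq : q ^ 2 * action n γ T = 1) :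
    InE n p (fun t => q • γ (T / (2 * π) * t) - ⨍ s in 0..2 * π, q • γ (T / (2 * π) * s))
      fun t => (q * (T / (2 * π))) • deriv γ (T / (2 * π) * t) := by
  have := hγ.continuous_deriv le_rfl
  refine inE_sub_intervalAverage p (fun t => ?_) (by fun_prop) (fun t => ?_) ?_
  · have hinner : HasDerivAt (fun t => T / (2 * π) * t) (T / (2 * π)) t :=
      hasDerivAt_const_mul _
    rw [mul_smul]
    exact ((hγ.differentiable one_ne_zero _).hasDerivAt.scomp t hinner).const_smul q
  · simp only [mul_add, div_mul_cancel₀ T two_pi_pos.ne', hper _]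
  · have hpointwise (t : ℝ) :
        ⟪Jmap n (q • γ (T / (2 * π) * t)), (q * (T / (2 * π))) • deriv γ (T / (2 * π) * t)⟫_ℝ =
        q ^ 2 * (T / (2 * π) * ⟪Jmap n (γ (T / (2 * π) * t)), deriv γ (T / (2 * π) * t)⟫_ℝ) := by
      simp only [Jmap_eq_complexStructure, map_smul, real_inner_smul_left, inner_smul_right]
      ring
    simp only [hpointwise]
    rw [intervalIntegral.integral_const_mul,
      integral_rescale_two_pi fun t => ⟪Jmap n (γ t), deriv γ t⟫_ℝ, mul_left_comm,
      ← action_eq_integral_inner_Jmap, hq]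

/- Rescaling space by `1 / √(action γ)` and time to period `2π` turns `γ` into a test loop. -/
theorem four_mul_action_mul_capacity_le (h0K : 0 ∈ K) (hT : 0 ≤ T) (hγ : ContDiff ℝ 1 γ)
    (hper : Function.Periodic γ T) :
    4 * action n γ T * capacity n K ≤ (∫ t in 0..T, suppFn n K (deriv γ t)) ^ 2 := by
  obtain hneg | hpos := le_or_gt (action n γ T) 0
  · have hcap : 0 ≤ capacity n K := sq_nonneg _
    exact (mul_nonpos_of_nonpos_of_nonneg (by linarith) hcap).trans (sq_nonneg _)
  set q := (√(action n γ T))⁻¹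
  have hq : 0 ≤ q := inv_nonneg.2 (Real.sqrt_nonneg _)
  have hq2 : q ^ 2 * action n γ T = 1 := by
    rw [inv_pow, Real.sq_sqrt hpos.le, inv_mul_cancel₀ hpos.ne']
  have hsupp : ∫ t in 0..2 * π, suppFn n K ((q * (T / (2 * π))) • deriv γ (T / (2 * π) * t)) =
      q * ∫ t in 0..T, suppFn n K (deriv γ t) := by
    simp only [suppFn_smul (mul_nonneg hq (div_nonneg hT two_pi_pos.le)), mul_assoc q]
    rw [intervalIntegral.integral_const_mul,
      integral_rescale_two_pi fun t => suppFn n K (deriv γ t)]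
  have hcap := capacity_le_of_inE h0K (inE_rescale 2 hγ hper hq2)
  rw [hsupp] at hcap
  calc 4 * action n γ T * capacity n K
      ≤ 4 * action n γ T * (1 / 2 * (q * ∫ t in 0..T, suppFn n K (deriv γ t))) ^ 2 := by gcongr
    _ = q ^ 2 * action n γ T * (∫ t in 0..T, suppFn n K (deriv γ t)) ^ 2 := by ring
    _ = (∫ t in 0..T, suppFn n K (deriv γ t)) ^ 2 := by rw [hq2, one_mul]

theorem deriv_neg_complexStructure_comp (hγ : Differentiable ℝ γ) (t : ℝ) :
    deriv (fun t => -complexStructure n (γ t)) t = -complexStructure n (deriv γ t) :=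
  ((complexStructure n).toContinuousLinearMap.hasFDerivAt.comp_hasDerivAt t
    (hγ t).hasDerivAt).neg.deriv

theorem action_neg_complexStructure_comp (hγ : Differentiable ℝ γ) (T : ℝ) :
    action n (fun t => -complexStructure n (γ t)) T = action n γ T := by
  simp only [action, Jmap_eq_complexStructure, deriv_neg_complexStructure_comp hγ, map_neg,
    inner_neg_left, inner_neg_right, LinearIsometry.inner_map_map, neg_neg]

end Capacity

section ClosedCharacteristic

variable {n : ℕ} {K : Set (E n)} {γ : ℝ → E n} {T : ℝ}

theorem IsClosedCharacteristic.exists_neg_complexStructure_deriv_eq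
    (hγ : IsClosedCharacteristic n K γ T) :
    ∃ d : ℝ, 0 < d ∧ ∀ t, -complexStructure n (deriv γ t) =
      d • gradient (fun x => gauge K x ^ 2) (γ t) := by
  obtain ⟨-, -, -, -, -, d, hd, hode⟩ := hγ
  refine ⟨d, hd, fun t => ?_⟩
  rw [hode t, Jmap_eq_complexStructure, map_smul, complexStructure_complexStructure, smul_neg,
    neg_neg]

theorem IsClosedCharacteristic.capacity_le_action (hγ : IsClosedCharacteristic n K γ T)
    (hcl : IsClosed K) (hK : Convex ℝ K) (h0K : K ∈ 𝓝 0)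
    (hdiff : ∀ t, DifferentiableAt ℝ (gauge K) (γ t)) : capacity n K ≤ action n γ T := by
  obtain ⟨d, hd, hnormal⟩ := hγ.exists_neg_complexStructure_deriv_eq
  obtain ⟨hT, hper, hC1, -, hγK, -⟩ := hγ
  have hγd : Differentiable ℝ γ := hC1.differentiable one_ne_zero
  have haction : action n γ T = d * T := by
    have hinner (t : ℝ) : ⟪-Jmap n (deriv γ t), γ t⟫_ℝ = d * 2 := by
      rw [Jmap_eq_complexStructure, hnormal, real_inner_smul_left,
        inner_gradient_gauge_sq_self (hdiff t), (gauge_eq_one_iff_mem_frontier hK h0K).2 (hγK t),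
        one_pow, mul_one]
    simp only [action, hinner, intervalIntegral.integral_const, sub_zero, smul_eq_mul]
    ring
  have hsupp (t : ℝ) : suppFn n K (deriv (fun t => -complexStructure n (γ t)) t) = d * 2 := by
    rw [deriv_neg_complexStructure_comp hγd, hnormal, suppFn_smul hd.le,
      suppFn_gradient_gauge_sq hcl hK h0K (hγK t) (hdiff t)]
  have hbound : 4 * (d * T) * capacity n K ≤ (∫ _ in 0..T, d * 2) ^ 2 := by
    simpa only [action_neg_complexStructure_comp hγd, haction, hsupp] using
      four_mul_action_mul_capacity_le (γ := fun t => -complexStructure n (γ t))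
        (mem_of_mem_nhds h0K) hT.le ((complexStructure n).contDiff.comp hC1).neg
        (fun t => by simp only [hper t])
  have hdT : 0 < 4 * (d * T) := by positivity
  rw [haction]
  refine le_of_mul_le_mul_left (hbound.trans_eq ?_) hdT
  rw [intervalIntegral.integral_const, smul_eq_mul]
  ring

theorem HasSmoothBoundary.differentiableAt_gauge (hKs : HasSmoothBoundary n K) {y : E n}
    (hy : y ≠ 0) : DifferentiableAt ℝ (gauge K) y :=
  (hKs.contDiffAt (isOpen_compl_singleton.mem_nhds hy)).differentiableAt one_ne_zero

theorem four_pi_capacity_le_euclidean_length_sq_general (hK : IsConvexBody n K)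
    (h0K : 0 ∈ interior K) (hγ : IsClosedCharacteristic n K γ T)
    (hdiff : ∀ t, DifferentiableAt ℝ (gauge K) (γ t)) :
    4 * π * capacity n K ≤ (∫ t in 0..T, ‖deriv γ t‖) ^ 2 := by
  have ⟨hT, hper, hC1, _⟩ := hγ
  calc 4 * π * capacity n K ≤ 4 * π * action n γ T := by
        gcongr
        exact hγ.capacity_le_action hK.1.isClosed hK.2.1 (mem_interior_iff_mem_nhds.1 h0K) hdiff
    _ ≤ (∫ t in 0..T, ‖deriv γ t‖) ^ 2 := four_pi_mul_action_le hT hC1 hper.eq.symm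

end ClosedCharacteristic

/-- For any capacity carrier `γ` of `K`, `4π·c(K) ≤ (Euclidean length of γ)²`. -/
theorem four_pi_capacity_le_euclidean_length_sq (n : ℕ) (K : Set (E n))
    (hK : IsConvexBody n K) (h0K : (0 : E n) ∈ interior K) (hKs : HasSmoothBoundary n K)
    (γ : ℝ → E n) (T₀ : ℝ) (hγ : IsCapacityCarrier n K γ T₀) :
    4 * π * capacity n K ≤ (∫ t in (0:ℝ)..T₀, ‖deriv γ t‖) ^ 2 := by
  obtain ⟨-, -, -, -, hγK, -⟩ := hγ.1
  exact four_pi_capacity_le_euclidean_length_sq_general hK h0K hγ.1 fun t =>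
    hKs.differentiableAt_gauge fun h0 => (hγK t).2 (h0 ▸ h0K)
end
end

section
/- Let K, T ⊂ ℝ^{2n} be convex bodies. Then the limit d_T(K) := lim_{ε→0⁺} (c(K+εT) − c(K))/ε exists (is finite), and d_T(K) ≥ 2·c(K)^{1/2}·c(T)^{1/2}. -/
open MeasureTheory Real Set Filter intervalIntegral Metric
open scoped InnerProductSpace Topology Pointwise

noncomputable section

/-!
For convex bodies `√c(S) = π · inf_z A_S(ż)`, where `A_S(ż)` is the mean of `h_S(ż)` over a period.
Since `h_{K+εT} = h_K + ε h_T`, the function `f(ε) = √c(K + εT)` is an infimum of the affine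
functions `ε ↦ π (A_K(ż) + ε A_T(ż))`. A translate of `δT` lies in `K` for some `δ > 0`, and the
velocity of a loop has mean zero, so `δ A_T ≤ A_K`: the infimum stays finite for `ε ≥ -δ`.
It is therefore concave on a neighbourhood of `0`, which gives the right derivative of `f` and hence
that of `c = f²`. The bound `f(ε) ≥ √c(K) + ε √c(T)` yields `f'(0⁺) ≥ √c(T)`.
-/

open Bornology

section InfimumOfAffine

theorem concaveOn_iInf {ι F : Type*} [Nonempty ι] [AddCommMonoid F] [SMul ℝ F] {s : Set F}
    {f : ι → F → ℝ} (hf : ∀ i, ConcaveOn ℝ s (f i))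
    (hbdd : ∀ x ∈ s, BddBelow (range fun i => f i x)) : ConcaveOn ℝ s fun x => ⨅ i, f i x := by
  refine ⟨(hf (Classical.arbitrary ι)).1, fun x hx y hy α β hα hβ hαβ => le_ciInf fun i => ?_⟩
  calc α • (⨅ j, f j x) + β • (⨅ j, f j y) ≤ α • f i x + β • f i y := by
        gcongr
        exacts [ciInf_le (hbdd x hx) i, ciInf_le (hbdd y hy) i]
    _ ≤ f i (α • x + β • y) := (hf i).2 hx hy hα hβ hαβ

variable {ι : Type*} {a b : ι → ℝ} {δ : ℝ}

theorem bddBelow_range_add_mul (hb : BddBelow (range b)) (hab : ∀ i, δ * b i ≤ a i) {ε : ℝ}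
    (hε : -δ ≤ ε) : BddBelow (range fun i => a i + ε * b i) := by
  obtain ⟨m, hm⟩ := hb
  refine ⟨(δ + ε) * m, ?_⟩
  rintro _ ⟨i, rfl⟩
  calc (δ + ε) * m ≤ (δ + ε) * b i :=
        mul_le_mul_of_nonneg_left (hm (mem_range_self i)) (by linarith)
    _ = δ * b i + ε * b i := by ring
    _ ≤ a i + ε * b i := by gcongr; exact hab i

theorem concaveOn_iInf_add_mul [Nonempty ι] (hb : BddBelow (range b))
    (hab : ∀ i, δ * b i ≤ a i) : ConcaveOn ℝ (Ici (-δ)) fun ε => ⨅ i, (a i + ε * b i) := by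
  refine concaveOn_iInf (fun i => ⟨convex_Ici _, fun x _ y _ α β _ _ hαβ => ?_⟩)
    fun ε hε => bddBelow_range_add_mul hb hab hε
  simp only [smul_eq_mul]
  linear_combination a i * hαβ

theorem iInf_add_mul_iInf_le [Nonempty ι] (ha : BddBelow (range a)) (hb : BddBelow (range b))
    {ε : ℝ} (hε : 0 ≤ ε) : (⨅ i, a i) + ε * ⨅ i, b i ≤ ⨅ i, (a i + ε * b i) := by
  refine le_ciInf fun i => ?_
  gcongr
  exacts [ciInf_le ha i, ciInf_le hb i]

theorem exists_hasDerivWithinAt_iInf_add_mul (hδ : 0 < δ) (hb : BddBelow (range b))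
    (hab : ∀ i, δ * b i ≤ a i) :
    ∃ m, HasDerivWithinAt (fun ε => ⨅ i, (a i + ε * b i)) m (Ioi 0) 0 ∧ ⨅ i, b i ≤ m := by
  rcases isEmpty_or_nonempty ι with _ | _
  · exact ⟨0, by simpa using hasDerivWithinAt_const (0 : ℝ) (Ioi 0) (0 : ℝ), by simp⟩
  have hzero : (0 : ℝ) ∈ interior (Ici (-δ)) := by simpa using hδ
  have hdiff : DifferentiableWithinAt ℝ (fun ε => ⨅ i, (a i + ε * b i)) (Ioi 0) 0 :=
    differentiableWithinAt_neg_iff.1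
      ((concaveOn_iInf_add_mul hb hab).neg.differentiableWithinAt_Ioi_of_mem_interior hzero)
  refine ⟨_, hdiff.hasDerivWithinAt, ge_of_tendsto
    ((hasDerivWithinAt_iff_tendsto_slope' self_notMem_Ioi).1 hdiff.hasDerivWithinAt) ?_⟩
  filter_upwards [self_mem_nhdsWithin] with ε (hε : 0 < ε)
  have ha : BddBelow (range a) := by
    simpa using bddBelow_range_add_mul hb hab (neg_nonpos.2 hδ.le)
  rw [slope_def_field, sub_zero, le_div_iff₀ hε, mul_comm, le_sub_iff_add_le']
  simpa using iInf_add_mul_iInf_le ha hb hε.le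

end InfimumOfAffine

section SupportFunction

variable {n : ℕ} {K L T : Set (E n)} {v : ℝ → E n}

theorem bddAbove_image_inner (hK : IsBounded K) (u : E n) :
    BddAbove ((fun x => ⟪x, u⟫_ℝ) '' K) :=
  (((innerSL ℝ).flip u).lipschitz.isBounded_image hK).bddAbove

theorem inner_le_suppFn (hK : IsBounded K) {x : E n} (hx : x ∈ K) (u : E n) :
    ⟪x, u⟫_ℝ ≤ suppFn n K u :=
  le_csSup (bddAbove_image_inner hK u) (mem_image_of_mem _ hx)

theorem suppFn_singleton (x u : E n) : suppFn n {x} u = ⟪x, u⟫_ℝ := by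
  simp only [suppFn, image_singleton, csSup_singleton]

theorem suppFn_zero (hK : K.Nonempty) : suppFn n K 0 = 0 := by
  simp only [suppFn, inner_zero_right, hK.image_const, csSup_singleton]

theorem suppFn_mono (hL : IsBounded L) (hK : K.Nonempty) (hKL : K ⊆ L) (u : E n) :
    suppFn n K u ≤ suppFn n L u :=
  csSup_le_csSup (bddAbove_image_inner hL u) (hK.image _) (image_mono hKL)

theorem suppFn_add (hK : IsBounded K) (hT : IsBounded T) (hK' : K.Nonempty) (hT' : T.Nonempty)
    (u : E n) : suppFn n (K + T) u = suppFn n K u + suppFn n T u := by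
  have himage : (fun x => ⟪x, u⟫_ℝ) '' (K + T) =
      (fun x => ⟪x, u⟫_ℝ) '' K + (fun x => ⟪x, u⟫_ℝ) '' T :=
    image_add ((innerSL ℝ).flip u)
  rw [suppFn, himage]
  exact csSup_add (hK'.image _) (bddAbove_image_inner hK u) (hT'.image _)
    (bddAbove_image_inner hT u)

theorem suppFn_smul_s13 {ε : ℝ} (hε : 0 ≤ ε) (T : Set (E n)) (u : E n) :
    suppFn n (ε • T) u = ε * suppFn n T u := by
  rw [suppFn, image_smul_comm _ _ _ fun x => real_inner_smul_left x u ε]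
  exact Real.sSup_smul_of_nonneg hε _

theorem exists_lipschitzWith_suppFn (hK : IsBounded K) (hK' : K.Nonempty) :
    ∃ C, LipschitzWith C (suppFn n K) := by
  obtain ⟨R, hR, hKR⟩ := hK.exists_pos_norm_le
  refine ⟨⟨R, hR.le⟩, LipschitzWith.of_le_add_mul _ fun u w => csSup_le (hK'.image _) ?_⟩
  rintro _ ⟨x, hx, rfl⟩
  calc ⟪x, u⟫_ℝ = ⟪x, w⟫_ℝ + ⟪x, u - w⟫_ℝ := by rw [← inner_add_right, add_sub_cancel]
    _ ≤ suppFn n K w + R * dist u w := by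
        rw [dist_eq_norm]
        gcongr
        · exact inner_le_suppFn hK hx w
        · exact (real_inner_le_norm _ _).trans (by gcongr; exact hKR x hx)

theorem intervalIntegrable_suppFn (hK : IsBounded K) (hK' : K.Nonempty) {s t : ℝ}
    (hv : IntervalIntegrable v volume s t) :
    IntervalIntegrable (fun τ => suppFn n K (v τ)) volume s t := by
  obtain ⟨C, hC⟩ := exists_lipschitzWith_suppFn hK hK'
  rw [intervalIntegrable_iff, IntegrableOn, ← memLp_one_iff_integrable] at hv ⊢
  exact hC.comp_memLp (suppFn_zero hK') hv

end SupportFunction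

section MeanSupport

variable {n : ℕ} {K L T : Set (E n)} {v : ℝ → E n}

/-- The functional `(1/2π) ∫₀^{2π} h_S(v(t)) dt` minimized in the definition of `capacity`, as a
function of the velocity `v = ż` of the loop. -/
def meanSuppFn (S : Set (E n)) (v : ℝ → E n) : ℝ :=
  (1 / (2 * π)) * ∫ t in (0 : ℝ)..(2 * π), suppFn n S (v t)

theorem meanSuppFn_mono (hL : IsBounded L) (hK : K.Nonempty) (hKL : K ⊆ L)
    (hv : IntervalIntegrable v volume 0 (2 * π)) : meanSuppFn K v ≤ meanSuppFn L v :=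
  mul_le_mul_of_nonneg_left
    (integral_mono two_pi_pos.le (intervalIntegrable_suppFn (hL.subset hKL) hK hv)
      (intervalIntegrable_suppFn hL (hK.mono hKL) hv) fun t => suppFn_mono hL hK hKL (v t))
    (by positivity)

theorem meanSuppFn_add_smul (hK : IsBounded K) (hT : IsBounded T) (hK' : K.Nonempty)
    (hT' : T.Nonempty) {ε : ℝ} (hε : 0 ≤ ε) (hv : IntervalIntegrable v volume 0 (2 * π)) :
    meanSuppFn (K + ε • T) v = meanSuppFn K v + ε * meanSuppFn T v := by
  simp only [meanSuppFn, suppFn_add hK (hT.smul₀ ε) hK' hT'.smul_set, suppFn_smul_s13 hε]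
  rw [integral_add (intervalIntegrable_suppFn hK hK' hv)
    ((intervalIntegrable_suppFn hT hT' hv).const_mul ε), intervalIntegral.integral_const_mul]
  ring

theorem meanSuppFn_singleton (x : E n) (hv : IntervalIntegrable v volume 0 (2 * π))
    (hv₀ : ∫ t in (0 : ℝ)..(2 * π), v t = 0) : meanSuppFn {x} v = 0 := by
  have hinner : ∫ t in (0 : ℝ)..(2 * π), ⟪x, v t⟫_ℝ = 0 := by
    simpa only [innerSL_apply_apply, hv₀, inner_zero_right] using
      (innerSL ℝ x).intervalIntegral_comp_comm hv
  simp only [meanSuppFn, suppFn_singleton, hinner, mul_zero]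

theorem meanSuppFn_nonneg (hK : IsBounded K) (hK' : K.Nonempty)
    (hv : IntervalIntegrable v volume 0 (2 * π)) (hv₀ : ∫ t in (0 : ℝ)..(2 * π), v t = 0) :
    0 ≤ meanSuppFn K v := by
  obtain ⟨x, hx⟩ := hK'
  exact (meanSuppFn_singleton x hv hv₀).ge.trans
    (meanSuppFn_mono hK (singleton_nonempty x) (singleton_subset_iff.2 hx) hv)

theorem mul_meanSuppFn_le (hK : IsBounded K) (hT : IsBounded T) (hT' : T.Nonempty) {x : E n}
    {δ : ℝ} (hδ : 0 ≤ δ) (hTK : {x} + δ • T ⊆ K) (hv : IntervalIntegrable v volume 0 (2 * π))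
    (hv₀ : ∫ t in (0 : ℝ)..(2 * π), v t = 0) : δ * meanSuppFn T v ≤ meanSuppFn K v :=
  calc δ * meanSuppFn T v = meanSuppFn ({x} + δ • T) v := by
        rw [meanSuppFn_add_smul isBounded_singleton hT (singleton_nonempty x) hT' hδ hv,
          meanSuppFn_singleton x hv hv₀, zero_add]
    _ ≤ meanSuppFn K v := meanSuppFn_mono hK ((singleton_nonempty x).add hT'.smul_set) hTK hv

end MeanSupport

section Capacity

variable {n : ℕ} {K T : Set (E n)} {v : ℝ → E n}

theorem InE.integral_eq_zero {p : ℝ} {z dz : ℝ → E n} (h : InE n p z dz) :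
    ∫ t in (0 : ℝ)..(2 * π), dz t = 0 := by
  obtain ⟨hperiodic, -, hprimitive, -⟩ := h
  have hclosed : z 0 = z 0 + ∫ t in (0 : ℝ)..(2 * π), dz t := by
    rw [← hprimitive, hperiodic.eq]
  exact left_eq_add.1 hclosed

/-- The velocities `ż` of the loops `z ∈ 𝓔₂`. The functional minimized by `capacity` depends on
the loop only through its velocity. -/
def velocities (n : ℕ) : Set (ℝ → E n) := {v | ∃ z, InE n 2 z v}

theorem intervalIntegrable_of_mem_velocities (hv : v ∈ velocities n) (s t : ℝ) :
    IntervalIntegrable v volume s t := by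
  obtain ⟨_, hz⟩ := hv
  exact hz.2.1 s t

theorem integral_eq_zero_of_mem_velocities (hv : v ∈ velocities n) :
    ∫ t in (0 : ℝ)..(2 * π), v t = 0 := by
  obtain ⟨_, hz⟩ := hv
  exact hz.integral_eq_zero

theorem meanSuppFn_nonneg_of_mem_velocities (hK : IsBounded K) (hK' : K.Nonempty)
    (hv : v ∈ velocities n) : 0 ≤ meanSuppFn K v :=
  meanSuppFn_nonneg hK hK' (intervalIntegrable_of_mem_velocities hv _ _)
    (integral_eq_zero_of_mem_velocities hv)

theorem capacity_eq_sq_iInf (S : Set (E n)) :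
    capacity n S = (π * ⨅ v : velocities n, meanSuppFn S v) ^ 2 := by
  rw [capacity, ← sInf_image']
  congr 3
  ext r
  constructor
  · rintro ⟨z, dz, hz, rfl⟩
    exact ⟨dz, ⟨z, hz⟩, rfl⟩
  · rintro ⟨dz, ⟨z, hz⟩, rfl⟩
    exact ⟨z, dz, hz, rfl⟩

theorem sqrt_capacity (hK : IsBounded K) (hK' : K.Nonempty) :
    √(capacity n K) = π * ⨅ v : velocities n, meanSuppFn K v := by
  rw [capacity_eq_sq_iInf, Real.sqrt_sq]
  exact mul_nonneg pi_pos.le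
    (Real.iInf_nonneg fun v => meanSuppFn_nonneg_of_mem_velocities hK hK' v.2)

theorem sq_sqrt_capacity (S : Set (E n)) : √(capacity n S) ^ 2 = capacity n S :=
  Real.sq_sqrt (sq_nonneg _)

theorem sqrt_capacity_add_smul (hK : IsBounded K) (hT : IsBounded T) (hK' : K.Nonempty)
    (hT' : T.Nonempty) {ε : ℝ} (hε : 0 ≤ ε) :
    √(capacity n (K + ε • T)) =
      π * ⨅ v : velocities n, (meanSuppFn K v + ε * meanSuppFn T v) := by
  rw [sqrt_capacity (hK.add (hT.smul₀ ε)) (hK'.add hT'.smul_set)]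
  congr 2 with v
  exact meanSuppFn_add_smul hK hT hK' hT' hε (intervalIntegrable_of_mem_velocities v.2 _ _)

theorem exists_hasDerivWithinAt_sqrt_capacity (hK : IsBounded K) (hT : IsBounded T)
    (hT' : T.Nonempty) {x : E n} {δ : ℝ} (hδ : 0 < δ) (hTK : {x} + δ • T ⊆ K) :
    ∃ m, HasDerivWithinAt (fun ε : ℝ => √(capacity n (K + ε • T))) m (Ioi 0) 0 ∧
      √(capacity n T) ≤ m := by
  have hK' : K.Nonempty := ((singleton_nonempty x).add hT'.smul_set).mono hTK
  have hbdd : BddBelow (range fun v : velocities n => meanSuppFn T v) :=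
    ⟨0, forall_mem_range.2 fun v => meanSuppFn_nonneg_of_mem_velocities hT hT' v.2⟩
  obtain ⟨m, hm, hle⟩ := exists_hasDerivWithinAt_iInf_add_mul hδ hbdd
    fun v => mul_meanSuppFn_le hK hT hT' hδ.le hTK (intervalIntegrable_of_mem_velocities v.2 _ _)
      (integral_eq_zero_of_mem_velocities v.2)
  refine ⟨π * m, (hm.const_mul π).congr (fun ε (hε : 0 < ε) => ?_) ?_, ?_⟩
  · exact sqrt_capacity_add_smul hK hT hK' hT' hε.le
  · exact sqrt_capacity_add_smul hK hT hK' hT' le_rfl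
  · rw [sqrt_capacity hT hT']
    gcongr

end Capacity

theorem exists_pos_singleton_add_smul_subset {V : Type*} [NormedAddCommGroup V] [NormedSpace ℝ V]
    {K T : Set V} (hK : (interior K).Nonempty) (hT : IsBounded T) :
    ∃ x : V, ∃ δ : ℝ, 0 < δ ∧ {x} + δ • T ⊆ K := by
  obtain ⟨x, hx⟩ := hK
  have hsmall : ∀ᶠ δ : ℝ in 𝓝[>] 0, {x} + δ • T ⊆ K :=
    (eventually_singleton_add_smul_subset hT (mem_interior_iff_mem_nhds.1 hx)).filter_mono
      nhdsWithin_le_nhds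
  obtain ⟨δ, hδ, hδT⟩ := (eventually_mem_nhdsWithin.and hsmall).exists
  exact ⟨x, δ, hδ, hδT⟩

theorem capacity_derivative_exists_and_lower_bound_general {n : ℕ} {K T : Set (E n)}
    (hK : IsBounded K) (hT' : T.Nonempty) {x : E n} {δ : ℝ} (hδ : 0 < δ)
    (hTK : {x} + δ • T ⊆ K) :
    ∃ L : ℝ,
      Tendsto (fun ε : ℝ => (capacity n (K + ε • T) - capacity n K) / ε) (𝓝[>] 0) (𝓝 L) ∧
      2 * √(capacity n K) * √(capacity n T) ≤ L := by
  have hT : IsBounded T := ((hK.sub (isBounded_singleton (x := x))).smul₀ δ⁻¹).subset fun y hy =>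
    ⟨x + δ • y - x, sub_mem_sub (hTK (add_mem_add rfl (smul_mem_smul_set hy))) rfl,
      by simp [hδ.ne']⟩
  obtain ⟨m, hm, hle⟩ := exists_hasDerivWithinAt_sqrt_capacity hK hT hT' hδ hTK
  have hzero : K + (0 : ℝ) • T = K := by rw [zero_smul_set hT', add_zero]
  have hderiv : HasDerivWithinAt (fun ε : ℝ => capacity n (K + ε • T))
      (2 * √(capacity n K) * m) (Ioi 0) 0 := by
    simpa [sq_sqrt_capacity, hzero] using hm.fun_pow 2
  refine ⟨_, ?_, mul_le_mul_of_nonneg_left hle (by positivity)⟩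
  simpa [slope_fun_def_field, hzero] using
    (hasDerivWithinAt_iff_tendsto_slope' self_notMem_Ioi).1 hderiv

/-- The derivative `d_T(K) = lim_{ε→0⁺} (c(K+εT) − c(K))/ε` exists and satisfies
`d_T(K) ≥ 2·c(K)^{1/2}·c(T)^{1/2}`. -/
theorem capacity_derivative_exists_and_lower_bound (n : ℕ) (K T : Set (E n))
    (hK : IsConvexBody n K) (hT : IsConvexBody n T) :
    ∃ L : ℝ,
      Tendsto (fun ε : ℝ => (capacity n (K + ε • T) - capacity n K) / ε)
        (𝓝[>] (0:ℝ)) (𝓝 L) ∧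
      2 * Real.sqrt (capacity n K) * Real.sqrt (capacity n T) ≤ L := by
  obtain ⟨x, δ, hδ, hTK⟩ := exists_pos_singleton_add_smul_subset hK.2.2 hT.1.isBounded
  exact capacity_derivative_exists_and_lower_bound_general hK.1.isBounded
    (hT.2.2.mono interior_subset) hδ hTK
end
end
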